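/- For n ≥ 2, the sequence (a_{n,m})_{m∈ℤ} defined by a_{n,m} = e^n/b_{n,m} for n-√n ≤ m ≤ n with b_{n,m} = Σ_{m-√n ≤ k ≤ m-1} n^k/k!, and a_{n,m} = 0 otherwise, has bounded variation: Σ_{m∈ℤ} |a_{n,m+1} - a_{n,m}| ≤ 978. -/

import Mathlib

/-!
Write `p k = n ^ k / k!` and `s = ⌊√n⌋`. For `n - √n ≤ m ≤ n` the sum `b n m` consists of exactly `s`
consecutive terms `p k`, all with `0 ≤ k < n` and `n - k ≤ 2√n`.

* `p` is nondecreasing on `[0, n]`, and passing from `m` to `m + 1` shifts the window of summation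
  by one. So `b n` is nondecreasing and `a n` is nonincreasing on the window `n - √n ≤ m ≤ n`
  (`kreissB_le_succ`). Since `a n ≥ 0` vanishes off the window, its variation is twice its value at
  the left end (`tsum_abs_sub_le_of_window`).
* Stirling's bound `k! ≤ e √k (k/e)^k` and `log (n/k) ≥ 1 - k/n` give
  `p k ≥ e^n · exp (-(n-k)²/n) / (e √n) ≥ e^n / (e⁵ √n)` (`exp_le_term`). Adding `s ≥ √n / 2` such
  terms gives `a n m ≤ 2 e⁵ < 489` on the window (`exp_le_kreissB`).
-/

open scoped BigOperators

/-- `b n m = Σ_{m - √n ≤ k ≤ m - 1} n^k / k!`. -/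
noncomputable def kreissB (n : ℕ) (m : ℤ) : ℝ :=
  ∑ k ∈ Finset.Icc ⌈(m : ℝ) - Real.sqrt n⌉ (m - 1), (n : ℝ) ^ k.toNat / (Nat.factorial k.toNat)

/-- `a n m = e^n / b n m` for `n - √n ≤ m ≤ n`, and `0` otherwise. -/
noncomputable def kreissA (n : ℕ) (m : ℤ) : ℝ :=
  if (n : ℝ) - Real.sqrt n ≤ (m : ℝ) ∧ (m : ℝ) ≤ (n : ℝ) then Real.exp n / kreissB n m else 0

/-- An effective upper Stirling bound, from the fact that `k! / (√(2k) (k/e)^k)` decreases in `k`. -/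
lemma factorial_le_stirling (k : ℕ) (hk : 1 ≤ k) :
    (k.factorial : ℝ) ≤ Real.exp 1 * Real.sqrt k * (k / Real.exp 1) ^ k := by
  have h := Stirling.stirlingSeq'_antitone (Nat.zero_le (k - 1))
  have hk' : (k - 1).succ = k := by omega
  simp only [Function.comp_apply, hk'] at h
  rw [show Nat.succ 0 = 1 from rfl, Stirling.stirlingSeq_one, Stirling.stirlingSeq] at h
  have hk0 : (0 : ℝ) < k := by exact_mod_cast hk
  rw [div_le_iff₀ (by positivity), Real.sqrt_mul (by norm_num)] at h
  calc _ ≤ _ := h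
    _ = _ := by field_simp

/-- Every Poisson weight within two standard deviations below the mean is at least `1 / (e⁵ √n)`. -/
lemma exp_le_term (n k : ℕ) (hn : 2 ≤ n) (hkn : k ≤ n)
    (h : (n : ℝ) - 2 * Real.sqrt n ≤ k) :
    Real.exp n ≤ Real.exp 5 * Real.sqrt n * ((n : ℝ) ^ k / k.factorial) := by
  have hn0 : (0 : ℝ) < n := by exact_mod_cast (by omega : 0 < n)
  have hs := Real.sq_sqrt hn0.le
  have hs1 : 1 ≤ Real.sqrt n := by
    rw [Real.one_le_sqrt]; exact_mod_cast (by omega : 1 ≤ n)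
  have hkn' : (k : ℝ) ≤ n := by exact_mod_cast hkn
  -- At `k = 0` Stirling's bound fails, but the hypothesis then forces `√n ≤ 2`.
  rcases Nat.eq_zero_or_pos k with rfl | hk
  · have h4 : (n : ℝ) ≤ 5 := by
      simp only [Nat.cast_zero] at h
      nlinarith
    have := Real.exp_le_exp.2 h4
    simp only [pow_zero, Nat.factorial_zero, Nat.cast_one, div_one, mul_one]
    nlinarith [Real.exp_pos 5]
  have hk0 : (0 : ℝ) < k := by exact_mod_cast hk
  have hlog : 1 - (k : ℝ) / n ≤ Real.log (n / k) := by
    have := Real.one_sub_inv_le_log_of_pos (x := (n : ℝ) / k) (by positivity)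
    rwa [inv_div] at this
  have hexp : (n : ℝ) ≤ 4 + (k + k * Real.log (n / k)) := by
    have h1 : (k : ℝ) * (1 - (k : ℝ) / n) ≤ k * Real.log (n / k) := by gcongr
    have h2 : ((n : ℝ) - k) ^ 2 / n ≤ 4 := by
      rw [div_le_iff₀ hn0]
      nlinarith
    have h3 : ((n : ℝ) - k) ^ 2 / n = n - k - k * (1 - (k : ℝ) / n) := by
      field_simp
    linarith
  have hpow : Real.exp (k + k * Real.log (n / k)) = Real.exp 1 ^ k * ((n : ℝ) / k) ^ k := by
    rw [Real.exp_add, Real.exp_nat_mul, Real.exp_log (by positivity), ← Real.exp_nat_mul, mul_one]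
  have hfac := factorial_le_stirling k hk
  have hsk : Real.sqrt k ≤ Real.sqrt n := Real.sqrt_le_sqrt hkn'
  have hf0 : (0 : ℝ) < k.factorial := by exact_mod_cast Nat.factorial_pos k
  have hE : Real.exp 5 = Real.exp 4 * Real.exp 1 := by rw [← Real.exp_add]; norm_num
  rw [← mul_div_assoc, le_div_iff₀ hf0]
  calc Real.exp n * k.factorial
      ≤ (Real.exp 4 * (Real.exp 1 ^ k * ((n : ℝ) / k) ^ k)) *
        (Real.exp 1 * Real.sqrt n * (k / Real.exp 1) ^ k) := by
        rw [← hpow, ← Real.exp_add]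
        have : (k.factorial : ℝ) ≤ Real.exp 1 * Real.sqrt n * (k / Real.exp 1) ^ k :=
          hfac.trans (by gcongr)
        gcongr
    _ = Real.exp 5 * Real.sqrt n * (n : ℝ) ^ k := by
        rw [hE, div_pow, div_pow]
        field_simp

/-- On the window, no summation index of `kreissB` is negative, so `Int.toNat` truncates nothing. -/
lemma ceil_nonneg_of_window (n : ℕ) (hn : 2 ≤ n) (m : ℤ) (hm : (n : ℝ) - Real.sqrt n ≤ m) :
    0 ≤ ⌈(m : ℝ) - Real.sqrt n⌉ := by
  have hn0 : (2 : ℝ) ≤ n := by exact_mod_cast hn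
  have hs := Real.sq_sqrt (by linarith : (0 : ℝ) ≤ n)
  have hs1 : 1 < Real.sqrt n := by
    rw [Real.lt_sqrt (by norm_num)]; linarith
  have : (-1 : ℤ) < ⌈(m : ℝ) - Real.sqrt n⌉ := by
    rw [Int.lt_ceil]
    push_cast
    nlinarith
  omega

/-- The bound `a n m ≤ 489` on the window, from `⌊√n⌋ ≥ √n / 2` terms of size at least
`e^n / (e⁵ √n)` each, and `2 e⁵ ≤ 489`. -/
lemma exp_le_kreissB (n : ℕ) (hn : 2 ≤ n) (m : ℤ) (hm : (n : ℝ) - Real.sqrt n ≤ m)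
    (hmn : m ≤ n) : Real.exp n ≤ 489 * kreissB n m := by
  have hL := ceil_nonneg_of_window n hn m hm
  have hn0 : (0 : ℝ) < n := by exact_mod_cast (by omega : 0 < n)
  have hs0 : 0 < Real.sqrt n := Real.sqrt_pos.2 hn0
  have hterm : ∀ k ∈ Finset.Icc ⌈(m : ℝ) - Real.sqrt n⌉ (m - 1),
      Real.exp n / (Real.exp 5 * Real.sqrt n) ≤ (n : ℝ) ^ k.toNat / (Nat.factorial k.toNat) := by
    intro k hk
    rw [Finset.mem_Icc] at hk
    lift k to ℕ using hL.trans hk.1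
    have h1 := Int.ceil_le.1 hk.1
    push_cast at h1
    rw [div_le_iff₀' (by positivity)]
    exact exp_le_term n k hn (by omega) (by linarith)
  have hsum := Finset.card_nsmul_le_sum _ _ _ hterm
  have hcard : (Finset.Icc ⌈(m : ℝ) - Real.sqrt n⌉ (m - 1)).card = Nat.sqrt n := by
    have : ⌈(m : ℝ) - Real.sqrt n⌉ = m - (Nat.sqrt n : ℤ) := by
      rw [sub_eq_add_neg, Int.ceil_intCast_add, Int.ceil_neg, Real.floor_real_sqrt_eq_nat_sqrt]
      ring
    rw [Int.card_Icc, this]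
    omega
  rw [hcard, nsmul_eq_mul] at hsum
  have hsq : Real.sqrt n ≤ 2 * Nat.sqrt n := by
    have h1 : Real.sqrt n ≤ Nat.sqrt n + 1 := Real.real_sqrt_le_nat_sqrt_succ
    have h2 : (1 : ℝ) ≤ Nat.sqrt n := by
      exact_mod_cast Nat.sqrt_pos.2 (by omega : 0 < n)
    linarith
  have he5 : 2 * Real.exp 5 ≤ 489 := by
    have h1 := Real.exp_one_lt_d9
    have h2 : Real.exp 5 = Real.exp 1 ^ 5 := by rw [← Real.exp_nat_mul]; norm_num
    have h3 : Real.exp 1 ^ 5 ≤ 2.72 ^ 5 := by gcongr; linarith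
    rw [h2]
    norm_num at h3 ⊢
    linarith
  have hB : Real.exp n ≤ 2 * Real.exp 5 * kreissB n m := by
    calc Real.exp n
        = Real.sqrt n * Real.exp 5 * (Real.exp n / (Real.exp 5 * Real.sqrt n)) := by
          field_simp
      _ ≤ (2 * Nat.sqrt n) * Real.exp 5 * (Real.exp n / (Real.exp 5 * Real.sqrt n)) := by gcongr
      _ = 2 * Real.exp 5 * (Nat.sqrt n * (Real.exp n / (Real.exp 5 * Real.sqrt n))) := by ring
      _ ≤ 2 * Real.exp 5 * kreissB n m := by
          gcongr
          exact hsum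
  have hB0 : 0 ≤ kreissB n m := Finset.sum_nonneg fun k _ => by positivity
  exact hB.trans (by gcongr)

/-- Both ends of the window of summation move by exactly one, so the two sums are compared term by
term through `n ^ k / k! ≤ n ^ (k + 1) / (k + 1)!` for `k + 1 ≤ n`. -/
lemma kreissB_le_succ (n : ℕ) (hn : 2 ≤ n) (m : ℤ) (hm : (n : ℝ) - Real.sqrt n ≤ m)
    (hmn : m ≤ n) : kreissB n m ≤ kreissB n (m + 1) := by
  have hL := ceil_nonneg_of_window n hn m hm
  have hshift : Finset.Icc ⌈((m + 1 : ℤ) : ℝ) - Real.sqrt n⌉ (m + 1 - 1) =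
      (Finset.Icc ⌈(m : ℝ) - Real.sqrt n⌉ (m - 1)).map (addRightEmbedding 1) := by
    rw [Finset.map_add_right_Icc]
    congr 1
    · rw [← Int.ceil_add_one]
      push_cast
      ring_nf
    · ring
  rw [kreissB, kreissB, hshift, Finset.sum_map]
  refine Finset.sum_le_sum fun k hk => ?_
  rw [Finset.mem_Icc] at hk
  lift k to ℕ using hL.trans hk.1
  have hkn : ((k : ℝ) + 1) ≤ n := by exact_mod_cast (by omega : (k : ℤ) + 1 ≤ n)
  have h1 : ((k : ℤ) + 1).toNat = k + 1 := by omega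
  simp only [addRightEmbedding_apply, h1, Int.toNat_natCast, Nat.factorial_succ, pow_succ]
  have hf0 : (0 : ℝ) < k.factorial := by exact_mod_cast Nat.factorial_pos k
  push_cast
  rw [div_le_div_iff₀ hf0 (by positivity)]
  have := mul_le_mul_of_nonneg_left hkn (by positivity : (0 : ℝ) ≤ (n : ℝ) ^ k * k.factorial)
  linarith

/-- A nonnegative sequence supported on `[p, p + N]` and nonincreasing there has variation at most
twice its first value: a jump up at `p`, then a telescoping descent to zero. -/
lemma tsum_abs_sub_le_of_window (f : ℤ → ℝ) (p : ℤ) (N : ℕ)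
    (hlt : ∀ m < p, f m = 0) (hgt : ∀ m, p + N < m → f m = 0) (h0 : 0 ≤ f p) (hN : 0 ≤ f (p + N))
    (hanti : ∀ m, p ≤ m → m < p + N → f (m + 1) ≤ f m) :
    ∑' m : ℤ, |f (m + 1) - f m| ≤ 2 * f p := by
  have hinj : Function.Injective fun i : ℕ => p - 1 + (i : ℤ) := by
    intro i j h
    simpa using h
  rw [tsum_eq_sum (s := (Finset.range (N + 2)).image fun i : ℕ => p - 1 + (i : ℤ)),
    Finset.sum_image fun i _ j _ h => hinj h, Finset.sum_range_succ, Finset.sum_range_succ']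
  · have hmid : ∑ i ∈ Finset.range N,
        |f (p - 1 + ((i + 1 : ℕ) : ℤ) + 1) - f (p - 1 + ((i + 1 : ℕ) : ℤ))| = f p - f (p + N) := by
      have := Finset.sum_range_sub' (fun i : ℕ => f (p + i)) N
      simp only [Nat.cast_zero, add_zero] at this
      rw [← this]
      refine Finset.sum_congr rfl fun i hi => ?_
      rw [Finset.mem_range] at hi
      have h1 : p - 1 + ((i + 1 : ℕ) : ℤ) = p + i := by push_cast; ring
      have h2 : p + ((i + 1 : ℕ) : ℤ) = p + i + 1 := by push_cast; ring
      rw [h1, h2, abs_sub_comm, abs_of_nonneg]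
      linarith [hanti (p + i) (by omega) (by omega)]
    have hfst : p - 1 + ((0 : ℕ) : ℤ) = p - 1 := by simp
    have hlst : p - 1 + ((N + 1 : ℕ) : ℤ) = p + N := by push_cast; ring
    rw [hmid, hfst, hlst, sub_add_cancel, hlt (p - 1) (by omega), hgt (p + N + 1) (by omega),
      sub_zero, zero_sub, abs_neg, abs_of_nonneg h0, abs_of_nonneg hN]
    linarith
  · intro m hm
    have : m < p - 1 ∨ p + N < m := by
      by_contra! hcon
      refine hm (Finset.mem_image.2 ⟨(m - (p - 1)).toNat, ?_, ?_⟩)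
      · rw [Finset.mem_range]; omega
      · omega
    rcases this with h | h
    · rw [hlt _ (by omega), hlt _ (by omega)]; simp
    · rw [hgt _ (by omega), hgt _ (by omega)]; simp

/-- For `n ≥ 2`, the sequence `(a_{n,m})_{m ∈ ℤ}` has bounded variation:
`Σ_{m ∈ ℤ} |a_{n,m+1} - a_{n,m}| ≤ 978`. -/
theorem kreissA_bounded_variation (n : ℕ) (hn : 2 ≤ n) :
    ∑' m : ℤ, |kreissA n (m + 1) - kreissA n m| ≤ 978 := by
  obtain ⟨N, hN⟩ : ∃ N : ℕ, ⌈(n : ℝ) - Real.sqrt n⌉ + N = n := by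
    have : ⌈(n : ℝ) - Real.sqrt n⌉ ≤ n := by
      rw [Int.ceil_le]
      push_cast
      linarith [Real.sqrt_nonneg n]
    exact ⟨(n - ⌈(n : ℝ) - Real.sqrt n⌉).toNat, by omega⟩
  set p := ⌈(n : ℝ) - Real.sqrt n⌉ with hp
  have hcast : ∀ m : ℤ, (m : ℝ) ≤ n ↔ m ≤ n := fun m => by exact_mod_cast Iff.rfl
  have hA : ∀ m : ℤ, kreissA n m = if p ≤ m ∧ m ≤ n then Real.exp n / kreissB n m else 0 := by
    intro m
    simp only [kreissA, hp, Int.ceil_le, hcast]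
  have hB : ∀ m : ℤ, p ≤ m → m ≤ n → Real.exp n ≤ 489 * kreissB n m := fun m h1 h2 =>
    exp_le_kreissB n hn m (Int.ceil_le.1 h1) h2
  have hBpos : ∀ m : ℤ, p ≤ m → m ≤ n → 0 < kreissB n m := fun m h1 h2 => by
    linarith [hB m h1 h2, Real.exp_pos n]
  have hpos : ∀ m : ℤ, p ≤ m → m ≤ n → 0 ≤ kreissA n m := fun m h1 h2 => by
    rw [hA, if_pos ⟨h1, h2⟩]
    exact div_nonneg (Real.exp_pos _).le (hBpos m h1 h2).le
  have hpn : p ≤ n := by omega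
  have hfirst : kreissA n p ≤ 489 := by
    rw [hA, if_pos ⟨le_rfl, hpn⟩, div_le_iff₀ (hBpos p le_rfl hpn)]
    exact hB p le_rfl hpn
  refine (tsum_abs_sub_le_of_window (kreissA n) p N ?_ ?_ (hpos p le_rfl hpn)
    (hpos _ (by omega) (by omega)) ?_).trans (by linarith)
  · intro m hm
    rw [hA, if_neg (by omega)]
  · intro m hm
    rw [hA, if_neg (by omega)]
  · intro m h1 h2
    rw [hA, hA, if_pos (by omega), if_pos (by omega)]
    exact div_le_div_of_nonneg_left (Real.exp_pos _).le (hBpos m h1 (by omega))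
      (kreissB_le_succ n hn m (Int.ceil_le.1 h1) (by omega))
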